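/- arXiv:2105.10043 — 3 statements merged into one kernel-verified Lean document; each statement's English description precedes it below -/
import Mathlib

section
/- Let x be a fractionally 2-edge-connected weighted graph on a finite set V, and let A, B be sets with ∅ ≠ A ⊊ B ⊊ V such that x(δ(A)) ≤ 2 + ε and x(δ(B)) ≤ 2 + ε for some ε ≥ 0. Then x(E(A, V ∖ B)) ≤ 1 + ε, and x(E(A, B ∖ A)) ≥ 1 − ε/2. -/
open scoped BigOperators

/-- The cut value `x(δ(S)) = ∑_{u ∈ S, v ∉ S} x u v`. -/
noncomputable def cutVal {V : Type*} [Fintype V] [DecidableEq V]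
    (x : V → V → ℝ) (S : Finset V) : ℝ :=
  ∑ u ∈ S, ∑ v ∈ Sᶜ, x u v

/-- For disjoint `A, B ⊆ V`, `x(E(A,B)) = ∑_{u ∈ A, v ∈ B} x u v`. -/
noncomputable def btwVal {V : Type*} (x : V → V → ℝ) (A B : Finset V) : ℝ :=
  ∑ u ∈ A, ∑ v ∈ B, x u v

theorem btwVal_comm {V : Type*} {x : V → V → ℝ} (hsymm : ∀ u v, x u v = x v u)
    (A B : Finset V) : btwVal x A B = btwVal x B A := by
  unfold btwVal
  rw [Finset.sum_comm]
  exact Finset.sum_congr rfl fun _ _ => Finset.sum_congr rfl fun _ _ => hsymm _ _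

theorem btwVal_union_right {V : Type*} [DecidableEq V] (x : V → V → ℝ) (S : Finset V)
    {T U : Finset V} (h : Disjoint T U) :
    btwVal x S (T ∪ U) = btwVal x S T + btwVal x S U := by
  simp only [btwVal, Finset.sum_union h, Finset.sum_add_distrib]

/-- If `V` is the disjoint union of `S`, `T`, `U`, then `x(δ(S)) = x(E(S,T)) + x(E(S,U))`. -/
theorem cutVal_eq_btwVal_add {V : Type*} [Fintype V] [DecidableEq V] (x : V → V → ℝ)
    {S T U : Finset V} (hS : Sᶜ = T ∪ U) (h : Disjoint T U) :
    cutVal x S = btwVal x S T + btwVal x S U := by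
  rw [← btwVal_union_right x S h, ← hS]
  rfl

theorem cutVal_compl {V : Type*} [Fintype V] [DecidableEq V] {x : V → V → ℝ}
    (hsymm : ∀ u v, x u v = x v u) (S : Finset V) : cutVal x Sᶜ = cutVal x S := by
  have h := btwVal_comm hsymm Sᶜ S
  simpa only [cutVal, btwVal, compl_compl] using h

/-- If `∅ ≠ A ⊊ B ⊊ V` are two `ε`-near min cuts of a fractionally 2-edge-connected
weighted graph, then `x(E(A, V ∖ B)) ≤ 1 + ε` and `x(E(A, B ∖ A)) ≥ 1 − ε/2`. -/
theorem stmt_4 {V : Type*} [Fintype V] [DecidableEq V]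
    (x : V → V → ℝ)
    (hsymm : ∀ u v, x u v = x v u)
    (hnonneg : ∀ u v, 0 ≤ x u v)
    (hdiag : ∀ v, x v v = 0)
    (h2ec : ∀ S : Finset V, S.Nonempty → S ≠ Finset.univ → 2 ≤ cutVal x S)
    (A B : Finset V) (hA : A.Nonempty) (hAB : A ⊂ B) (hBuniv : B ⊂ Finset.univ)
    (ε : ℝ) (hε : 0 ≤ ε)
    (hcutA : cutVal x A ≤ 2 + ε) (hcutB : cutVal x B ≤ 2 + ε) :
    btwVal x A Bᶜ ≤ 1 + ε ∧ 1 - ε / 2 ≤ btwVal x A (B \ A) := by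
  have hsub : A ⊆ B := hAB.1
  have cutA : cutVal x A = btwVal x A (B \ A) + btwVal x A Bᶜ :=
    cutVal_eq_btwVal_add x (by grind [Finset.mem_compl])
      (by grind [Finset.disjoint_left, Finset.mem_compl])
  have cutD : cutVal x (B \ A) = btwVal x (B \ A) A + btwVal x (B \ A) Bᶜ :=
    cutVal_eq_btwVal_add x (by grind [Finset.mem_compl])
      (by grind [Finset.disjoint_left, Finset.mem_compl])
  have cutC : cutVal x Bᶜ = btwVal x Bᶜ A + btwVal x Bᶜ (B \ A) :=
    cutVal_eq_btwVal_add x (by grind [Finset.mem_compl])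
      (by grind [Finset.disjoint_left, Finset.mem_compl])
  rw [cutVal_compl hsymm, btwVal_comm hsymm _ A, btwVal_comm hsymm _ (B \ A)] at cutC
  rw [btwVal_comm hsymm _ A] at cutD
  have hA2 := h2ec A hA (hAB.trans hBuniv).ne
  have hD2 := h2ec (B \ A) (Finset.sdiff_nonempty.2 hAB.2) fun h =>
    hBuniv.2 (h ▸ Finset.sdiff_subset)
  constructor <;> linarith
end

section
/- Let G = (V, E) be a finite simple graph with edge weights x : E → ℝ≥0 and let μ be a distribution over spanning trees of G with marginals x. Let A, B ⊆ V be disjoint nonempty sets such that every vertex v ∈ A ∪ B satisfies x(δ({v})) = 2, and suppose x(δ(A)) ≤ 2 + ε_A, x(δ(B)) ≤ 2 + ε_B, and x(δ(A ∪ B)) ≤ 2 + ε_{A∪B} for some ε_A, ε_B, ε_{A∪B} ≥ 0. Then the probability under μ that the sampled spanning tree T has exactly one edge in E(A,B) is at least 1 − (ε_A + ε_B + ε_{A∪B})/2. -/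
open scoped BigOperators Classical

/-- The edges of `E` with exactly one endpoint in `S` (the cut `δ(S)`). -/
noncomputable def cutEdges {V : Type*} (E : Finset (Sym2 V)) (S : Finset V) :
    Finset (Sym2 V) :=
  E.filter (fun e => ∃ a b : V, e = s(a, b) ∧ a ∈ S ∧ b ∉ S)

/-- The edges of `E` with one endpoint in `A` and one endpoint in `B` (the set `E(A,B)`). -/
noncomputable def betweenEdges {V : Type*} (E : Finset (Sym2 V)) (A B : Finset V) :
    Finset (Sym2 V) :=
  E.filter (fun e => ∃ a b : V, e = s(a, b) ∧ a ∈ A ∧ b ∈ B)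

/-- `T` is a spanning tree of the vertex set `V`: the graph on `V` with edge set `T`
is connected and acyclic. -/
def IsSpanningTree {V : Type*} (T : Finset (Sym2 V)) : Prop :=
  (SimpleGraph.fromEdgeSet (T : Set (Sym2 V))).Connected ∧
    (SimpleGraph.fromEdgeSet (T : Set (Sym2 V))).IsAcyclic

/-- The edges of `E` with both endpoints in `S` (the set `E(S)`). -/
noncomputable def insideEdges {V : Type*} (E : Finset (Sym2 V)) (S : Finset V) :
    Finset (Sym2 V) :=
  E.filter (fun e => ∀ v ∈ e, v ∈ S)

lemma insideEdges_subset {V : Type*} (E : Finset (Sym2 V)) (S : Finset V) :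
    insideEdges E S ⊆ E :=
  Finset.filter_subset _ _

open Finset in
/-- An acyclic edge set has at most `|S| - 1` edges inside a nonempty vertex set `S`. -/
lemma card_filter_inside_add_one_le {V : Type*} {T : Finset (Sym2 V)}
    (hT : ∀ e ∈ T, ¬ e.IsDiag)
    (hac : (SimpleGraph.fromEdgeSet (T : Set (Sym2 V))).IsAcyclic)
    {S : Finset V} (hS : S.Nonempty) :
    #(insideEdges T S) + 1 ≤ #S := by
  have : Nonempty S := hS.to_subtype
  obtain ⟨F, hF, hFt⟩ :=
    (SimpleGraph.connected_top (V := S)).exists_isTree_le_of_le_of_isAcyclic le_top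
      (hac.comap (SimpleGraph.Embedding.comap (Function.Embedding.subtype (· ∈ S))
        (SimpleGraph.fromEdgeSet (T : Set (Sym2 V)))).toHom Subtype.val_injective)
  have hcard := hFt.2.card_edgeFinset
  rw [Fintype.card_coe] at hcard
  rw [← hcard, Nat.add_le_add_iff_right]
  refine (card_le_card (t := F.edgeFinset.image (Sym2.map Subtype.val)) ?_).trans card_image_le
  intro e
  induction e with
  | _ a b =>
    intro he
    simp only [insideEdges, mem_filter, Sym2.mem_iff, forall_eq_or_imp, forall_eq] at he
    obtain ⟨heT, ha, hb⟩ := he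
    refine mem_image.2 ⟨s(⟨a, ha⟩, ⟨b, hb⟩), ?_, rfl⟩
    rw [SimpleGraph.mem_edgeFinset, SimpleGraph.mem_edgeSet]
    apply hF
    simpa using ⟨heT, hT _ heT⟩

/-- Summing the weighted degrees over `S` counts inner edges twice and cut edges once. -/
lemma sum_sum_cutEdges_singleton {V : Type*} (E : Finset (Sym2 V))
    (hE : ∀ e ∈ E, ¬ e.IsDiag) (x : Sym2 V → ℝ) (S : Finset V) :
    ∑ v ∈ S, ∑ e ∈ cutEdges E {v}, x e =
      2 * ∑ e ∈ insideEdges E S, x e + ∑ e ∈ cutEdges E S, x e := by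
  simp only [cutEdges, insideEdges, Finset.sum_filter]
  rw [Finset.sum_comm, Finset.mul_sum, ← Finset.sum_add_distrib]
  refine Finset.sum_congr rfl fun e he => ?_
  have hd := hE e he
  induction e with
  | _ a b =>
    rw [Sym2.mk_isDiag_iff] at hd
    have hcut (S : Finset V) : (∃ c d, s(a, b) = s(c, d) ∧ c ∈ S ∧ d ∉ S) ↔
        (a ∈ S ∧ b ∉ S) ∨ (b ∈ S ∧ a ∉ S) := by
      simp only [Sym2.eq_iff]
      constructor
      · rintro ⟨c, d, ⟨rfl, rfl⟩ | ⟨rfl, rfl⟩, h⟩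
        exacts [.inl h, .inr h]
      · rintro (h | h)
        exacts [⟨a, b, .inl ⟨rfl, rfl⟩, h⟩, ⟨b, a, .inr ⟨rfl, rfl⟩, h⟩]
    have hsingle (v : V) : (if ∃ c d, s(a, b) = s(c, d) ∧ c ∈ ({v} : Finset V) ∧
        d ∉ ({v} : Finset V) then x s(a, b) else 0) =
        (if a = v then x s(a, b) else 0) + (if b = v then x s(a, b) else 0) := by
      simp only [hcut]
      simp only [Finset.mem_singleton]
      by_cases h1 : a = v <;> by_cases h2 : b = v <;> simp_all
    simp only [hsingle]
    simp only [Finset.sum_add_distrib, Finset.sum_ite_eq, hcut, Sym2.mem_iff,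
      forall_eq_or_imp, forall_eq]
    by_cases h1 : a ∈ S <;> by_cases h2 : b ∈ S <;> simp [h1, h2, two_mul]

/-- The expected number of sampled edges in `F` is the total marginal weight of `F`. -/
lemma sum_mul_card_inter {ι : Type*} [Fintype ι] [DecidableEq ι] {E F : Finset ι} {x : ι → ℝ}
    {μ : Finset ι → ℝ}
    (hmarg : ∀ e ∈ E, ∑ T ∈ Finset.univ.filter (fun T => e ∈ T), μ T = x e) (hF : F ⊆ E) :
    ∑ T, μ T * ((T ∩ F).card : ℝ) = ∑ e ∈ F, x e := by
  rw [← Finset.sum_congr rfl fun e he => hmarg e (hF he)]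
  simp only [Finset.sum_filter]
  rw [Finset.sum_comm]
  refine Finset.sum_congr rfl fun T _ => ?_
  rw [← Finset.sum_filter, Finset.sum_const, nsmul_eq_mul, mul_comm, Finset.inter_comm,
    Finset.filter_mem_eq_inter]

/-- If all degrees in `S` are `2` and `x(δ(S)) ≤ 2 + ε`, then the expected deficit of the sampled
tree inside `S` is at most `ε / 2`. -/
lemma sum_mul_deficit_le {V : Type*} [Fintype V] [DecidableEq V]
    {E : Finset (Sym2 V)} (hE : ∀ e ∈ E, ¬ e.IsDiag) {x : Sym2 V → ℝ}
    {μ : Finset (Sym2 V) → ℝ} (hsum : ∑ T : Finset (Sym2 V), μ T = 1)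
    (hmarg : ∀ e ∈ E, ∑ T ∈ Finset.univ.filter (fun T => e ∈ T), μ T = x e)
    {S : Finset V} (hdeg : ∀ v ∈ S, ∑ e ∈ cutEdges E {v}, x e = 2) {ε : ℝ}
    (hcut : ∑ e ∈ cutEdges E S, x e ≤ 2 + ε) :
    ∑ T, μ T * ((S.card : ℝ) - 1 - ((T ∩ insideEdges E S).card : ℝ)) ≤ ε / 2 := by
  have h := sum_sum_cutEdges_singleton E hE x S
  rw [Finset.sum_congr rfl hdeg, Finset.sum_const, nsmul_eq_mul] at h
  simp only [mul_sub (μ _)]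
  rw [Finset.sum_sub_distrib, sum_mul_card_inter hmarg (insideEdges_subset E S),
    Finset.sum_sub_distrib, ← Finset.sum_mul, ← Finset.sum_mul, hsum]
  linarith

/-- Edges inside `A ∪ B` are those inside `A`, those inside `B`, and those between them. -/
lemma card_inter_inside_union {V : Type*} [DecidableEq V] (T E : Finset (Sym2 V))
    {A B : Finset V} (hdisj : Disjoint A B) :
    (T ∩ insideEdges E (A ∪ B)).card =
      (T ∩ insideEdges E A).card + (T ∩ insideEdges E B).card +
        (T ∩ betweenEdges E A B).card := by
  have hAB : ∀ v ∈ A, v ∉ B := fun _ hv => Finset.disjoint_left.1 hdisj hv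
  have hbtw (a b : V) : (∃ c d, s(a, b) = s(c, d) ∧ c ∈ A ∧ d ∈ B) ↔
      (a ∈ A ∧ b ∈ B) ∨ (b ∈ A ∧ a ∈ B) := by
    simp only [Sym2.eq_iff]
    constructor
    · rintro ⟨c, d, ⟨rfl, rfl⟩ | ⟨rfl, rfl⟩, h⟩
      exacts [.inl h, .inr h]
    · rintro (h | h)
      exacts [⟨a, b, .inl ⟨rfl, rfl⟩, h⟩, ⟨b, a, .inr ⟨rfl, rfl⟩, h⟩]
  rw [← Finset.card_union_of_disjoint, ← Finset.card_union_of_disjoint]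
  · congr 1
    ext e
    induction e with
    | _ a b =>
      simp only [betweenEdges, insideEdges, Finset.mem_inter, Finset.mem_union,
        Finset.mem_filter, hbtw, Sym2.mem_iff, forall_eq_or_imp, forall_eq]
      tauto
  · rw [Finset.disjoint_left]
    intro e
    induction e with
    | _ a b =>
      simp only [betweenEdges, insideEdges, Finset.mem_inter, Finset.mem_union,
        Finset.mem_filter, hbtw, Sym2.mem_iff, forall_eq_or_imp, forall_eq]
      have := hAB a
      have := hAB b
      tauto
  · rw [Finset.disjoint_left]
    intro e
    induction e with
    | _ a b =>
      simp only [insideEdges, Finset.mem_inter, Finset.mem_filter, Sym2.mem_iff,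
        forall_eq_or_imp, forall_eq]
      have := hAB a
      tauto

/-- If `μ` is a distribution over spanning trees with marginals `x`, `A, B` are disjoint
nonempty sets whose vertices all satisfy `x(δ(v)) = 2`, and `A`, `B`, `A ∪ B` are
`ε_A`-, `ε_B`-, `ε_{A∪B}`-near min cuts respectively, then the sampled tree `T` has
exactly one edge in `E(A,B)` with probability at least `1 − (ε_A + ε_B + ε_{A∪B})/2`. -/
theorem stmt_6 {V : Type*} [Fintype V] [DecidableEq V]
    (E : Finset (Sym2 V)) (hE : ∀ e ∈ E, ¬ e.IsDiag)
    (x : Sym2 V → ℝ) (hx : ∀ e, 0 ≤ x e)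
    (μ : Finset (Sym2 V) → ℝ)
    (hμ0 : ∀ T, 0 ≤ μ T)
    (hsupp : ∀ T, μ T ≠ 0 → T ⊆ E ∧ IsSpanningTree T)
    (hsum : ∑ T : Finset (Sym2 V), μ T = 1)
    (hmarg : ∀ e ∈ E, ∑ T ∈ Finset.univ.filter (fun T => e ∈ T), μ T = x e)
    (A B : Finset V) (hdisj : Disjoint A B) (hA : A.Nonempty) (hB : B.Nonempty)
    (hdeg : ∀ v ∈ A ∪ B, ∑ e ∈ cutEdges E {v}, x e = 2)
    (εA εB εAB : ℝ) (hεA : 0 ≤ εA) (hεB : 0 ≤ εB) (hεAB : 0 ≤ εAB)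
    (hcutA : ∑ e ∈ cutEdges E A, x e ≤ 2 + εA)
    (hcutB : ∑ e ∈ cutEdges E B, x e ≤ 2 + εB)
    (hcutAB : ∑ e ∈ cutEdges E (A ∪ B), x e ≤ 2 + εAB) :
    1 - (εA + εB + εAB) / 2 ≤
      ∑ T ∈ Finset.univ.filter
        (fun T => (T ∩ betweenEdges E A B).card = 1), μ T := by
  have hdA := sum_mul_deficit_le hE hsum hmarg
    (fun v hv => hdeg v (Finset.mem_union_left _ hv)) hcutA
  have hdB := sum_mul_deficit_le hE hsum hmarg
    (fun v hv => hdeg v (Finset.mem_union_right _ hv)) hcutB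
  have hdAB := sum_mul_deficit_le hE hsum hmarg hdeg hcutAB
  set d : Finset V → Finset (Sym2 V) → ℝ := fun S T =>
    (S.card : ℝ) - 1 - ((T ∩ insideEdges E S).card : ℝ) with hd
  have key (T : Finset (Sym2 V)) : μ T - (μ T * d A T + μ T * d B T + μ T * d (A ∪ B) T) ≤
      if (T ∩ betweenEdges E A B).card = 1 then μ T else 0 := by
    by_cases h0 : μ T = 0
    · simp [h0]
    obtain ⟨hTE, -, hac⟩ := hsupp T h0
    have hle {S : Finset V} (hS : S.Nonempty) :
        (T ∩ insideEdges E S).card + 1 ≤ S.card := by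
      have hTS : T ∩ insideEdges E S = insideEdges T S := by
        ext e
        simp only [insideEdges, Finset.mem_inter, Finset.mem_filter]
        exact ⟨fun h => ⟨h.1, h.2.2⟩, fun h => ⟨h.1, hTE h.1, h.2⟩⟩
      rw [hTS]
      exact card_filter_inside_add_one_le (fun e he => hE e (hTE he)) hac hS
    have hleA := hle hA
    have hleB := hle hB
    have hleAB := hle (hA.mono (Finset.subset_union_left (s₂ := B)))
    have hcard := card_inter_inside_union T E hdisj
    have hcardAB := Finset.card_union_of_disjoint hdisj
    have hcast {m n : ℕ} (h : m + 1 ≤ n) : (0 : ℝ) ≤ (n : ℝ) - 1 - m := by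
      have : ((m + 1 : ℕ) : ℝ) ≤ n := Nat.cast_le.2 h
      push_cast at this
      linarith
    have hnn : 0 ≤ d A T + d B T + d (A ∪ B) T :=
      add_nonneg (add_nonneg (hcast hleA) (hcast hleB)) (hcast hleAB)
    rw [← mul_add, ← mul_add]
    split_ifs with hone
    · linarith [mul_nonneg (hμ0 T) hnn]
    · have hbig : 1 ≤ d A T + d B T + d (A ∪ B) T := by
        have hnat : (T ∩ insideEdges E A).card +
            (T ∩ insideEdges E B).card +
            (T ∩ insideEdges E (A ∪ B)).card + 4 ≤
            A.card + B.card + (A ∪ B).card := by omega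
        have hreal := (Nat.cast_le (α := ℝ)).2 hnat
        push_cast at hreal
        simp only [hd]
        linarith
      linarith [mul_le_mul_of_nonneg_left hbig (hμ0 T)]
  have htotal := Finset.sum_le_sum fun T (_ : T ∈ Finset.univ) => key T
  rw [← Finset.sum_filter, Finset.sum_sub_distrib, Finset.sum_add_distrib,
    Finset.sum_add_distrib, hsum] at htotal
  linarith
end

section
/- Let V be a finite set, let u₀, v₀ ∈ V be distinct, and let N be a family of cuts of V such that every S ∈ N satisfies u₀ ∉ S and v₀ ∉ S. Then for any two elements u, v ∈ V, there is at most one connected component C of N (under the crossing relation) with the property that u and v lie in two distinct atoms of C, neither of which is the atom of C containing u₀ and v₀. -/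
open scoped Classical

/-- Two sets `A, B ⊆ V` cross if `A ∩ B`, `A \ B`, `B \ A` and `V \ (A ∪ B)` are all nonempty. -/
def CutCrosses {V : Type*} [Fintype V] [DecidableEq V] (A B : Finset V) : Prop :=
  (A ∩ B).Nonempty ∧ (A \ B).Nonempty ∧ (B \ A).Nonempty ∧ ((A ∪ B)ᶜ).Nonempty

/-- The crossing relation restricted to the family `N`. -/
def crossRel {V : Type*} [Fintype V] [DecidableEq V] (N : Set (Finset V))
    (A B : Finset V) : Prop :=
  A ∈ N ∧ B ∈ N ∧ CutCrosses A B

/-- `C` is a connected component of the family `N` under the crossing relation: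
it is an equivalence class of `N` under the reflexive–transitive closure of the
crossing relation restricted to `N`. -/
def IsCutComponent {V : Type*} [Fintype V] [DecidableEq V] (N : Set (Finset V))
    (C : Set (Finset V)) : Prop :=
  ∃ S₀ ∈ N, C = {S | S ∈ N ∧ Relation.ReflTransGen (crossRel N) S₀ S}

/-- The atom of the component `C` containing `u`: all vertices that lie in exactly the
same cuts of `C` as `u` does. -/
noncomputable def atomOf {V : Type*} [Fintype V] [DecidableEq V]
    (C : Set (Finset V)) (u : V) : Finset V :=
  Finset.univ.filter (fun v => ∀ S ∈ C, (v ∈ S ↔ u ∈ S))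

section CutComponents

variable {V : Type*} [Fintype V] [DecidableEq V] {N C C' : Set (Finset V)} {A B T : Finset V}

theorem CutCrosses.symm (h : CutCrosses A B) : CutCrosses B A :=
  ⟨Finset.inter_comm A B ▸ h.1, h.2.2.1, h.2.1, Finset.union_comm A B ▸ h.2.2.2⟩

theorem CutCrosses.of_mem {x w : V} (hxA : x ∈ A) (hxB : x ∈ B) (hwA : w ∉ A) (hwB : w ∉ B)
    (hAB : ¬ A ⊆ B) (hBA : ¬ B ⊆ A) : CutCrosses A B :=
  ⟨⟨x, by simp [hxA, hxB]⟩, Finset.sdiff_nonempty.2 hAB, Finset.sdiff_nonempty.2 hBA,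
    ⟨w, by simp [hwA, hwB]⟩⟩

instance crossRel.instSymm (N : Set (Finset V)) : Std.Symm (crossRel N) :=
  ⟨fun _ _ h => ⟨h.2.1, h.1, h.2.2.symm⟩⟩

theorem IsCutComponent.eq_setOf (hC : IsCutComponent N C) (hA : A ∈ C) :
    C = {S | S ∈ N ∧ Relation.ReflTransGen (crossRel N) A S} := by
  obtain ⟨S₀, -, rfl⟩ := hC
  have hsymm := Relation.ReflTransGen.stdSymm.symm _ _ hA.2
  ext S
  exact ⟨fun h => ⟨h.1, hsymm.trans h.2⟩, fun h => ⟨h.1, hA.2.trans h.2⟩⟩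

theorem IsCutComponent.subset (hC : IsCutComponent N C) : C ⊆ N := by
  obtain ⟨S₀, -, rfl⟩ := hC
  exact fun _ h => h.1

theorem IsCutComponent.mem_of_cutCrosses (hC : IsCutComponent N C) (hA : A ∈ C) (hT : T ∈ N)
    (h : CutCrosses A T) : T ∈ C := by
  rw [hC.eq_setOf hA]
  exact ⟨hT, .single ⟨hC.subset hA, hT, h⟩⟩

theorem IsCutComponent.eq_of_mem (hC : IsCutComponent N C) (hC' : IsCutComponent N C')
    (hA : A ∈ C) (hA' : A ∈ C') : C = C' :=
  (hC.eq_setOf hA).trans (hC'.eq_setOf hA').symm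

/-- A member of `N` outside a component that contains one cut of the component contains
all of them, provided some point lies in no member of `N`. -/
theorem IsCutComponent.subset_of_subset {w : V} (hw : ∀ S ∈ N, w ∉ S)
    (hC : IsCutComponent N C) (hT : T ∈ N) (hTC : T ∉ C) (hA : A ∈ C) (hAT : A ⊆ T)
    (hB : B ∈ C) : B ⊆ T := by
  rw [hC.eq_setOf hA] at hB
  induction hB.2 with
  | refl => exact hAT
  | @tail S S' hS hSS' ih =>
    have hST : S ⊆ T := ih ⟨hSS'.1, hS⟩
    have hS'C : S' ∈ C := by
      rw [hC.eq_setOf hA]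
      exact ⟨hSS'.2.1, hS.tail hSS'⟩
    obtain ⟨⟨x, hx⟩, hdiff, -⟩ := hSS'.2.2
    rw [Finset.mem_inter] at hx
    by_contra hS'T
    refine hTC (hC.mem_of_cutCrosses hS'C hT (.of_mem hx.2 (hST hx.1) (hw _ hSS'.2.1) (hw _ hT)
      hS'T fun hTS' => ?_))
    exact Finset.sdiff_nonempty.1 hdiff (hST.trans hTS')

theorem atomOf_eq_of_forall {u v : V} (h : ∀ S ∈ C, (u ∈ S ↔ v ∈ S)) :
    atomOf C u = atomOf C v := by
  ext x
  simp only [atomOf, Finset.mem_filter, Finset.mem_univ, true_and]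
  exact forall₂_congr fun S hS => by rw [h S hS]

theorem exists_mem_of_atomOf_ne {u w : V} (hw : ∀ S ∈ C, w ∉ S) (h : atomOf C u ≠ atomOf C w) :
    ∃ S ∈ C, u ∈ S := by
  by_contra! hu
  exact h (atomOf_eq_of_forall fun S hS => iff_of_false (hu S hS) (hw S hS))

theorem IsCutComponent.exists_superset_of_separates {u v w : V} (hw : ∀ S ∈ N, w ∉ S)
    (hC : IsCutComponent N C) (hC' : IsCutComponent N C') (hdisj : Disjoint C C')
    (hA : A ∈ C) (huA : u ∈ A) (hvA : v ∉ A)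
    (hu : ∃ S ∈ C', u ∈ S) (hv : ∃ S ∈ C', v ∈ S) : ∃ B ∈ C', ∀ S ∈ C, S ⊆ B := by
  obtain ⟨B, hB, huB⟩ := hu
  obtain ⟨B', hB', hvB'⟩ := hv
  have hAC' : A ∉ C' := Set.disjoint_left.1 hdisj hA
  have hBC : B ∉ C := Set.disjoint_right.1 hdisj hB
  have hBA : ¬ B ⊆ A := fun h =>
    hvA (hC'.subset_of_subset hw (hC.subset hA) hAC' hB h hB' hvB')
  have hAB : A ⊆ B := by
    by_contra h
    exact hBC (hC.mem_of_cutCrosses hA (hC'.subset hB)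
      (.of_mem huA huB (hw _ (hC.subset hA)) (hw _ (hC'.subset hB)) h hBA))
  exact ⟨B, hB, fun S hS => hC.subset_of_subset hw (hC'.subset hB) hBC hA hAB hS⟩

theorem IsCutComponent.exists_superset {u v w : V} (hw : ∀ S ∈ N, w ∉ S)
    (hC : IsCutComponent N C) (hC' : IsCutComponent N C') (hdisj : Disjoint C C')
    (hdist : atomOf C u ≠ atomOf C v)
    (hu : atomOf C' u ≠ atomOf C' w) (hv : atomOf C' v ≠ atomOf C' w) :
    ∃ B ∈ C', ∀ S ∈ C, S ⊆ B := by
  have hwC' : ∀ S ∈ C', w ∉ S := fun S hS => hw S (hC'.subset hS)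
  have hu' := exists_mem_of_atomOf_ne hwC' hu
  have hv' := exists_mem_of_atomOf_ne hwC' hv
  obtain ⟨A, hA, hsep⟩ : ∃ A ∈ C, ¬ (u ∈ A ↔ v ∈ A) := by
    by_contra! h
    exact hdist (atomOf_eq_of_forall h)
  by_cases huA : u ∈ A
  · exact hC.exists_superset_of_separates hw hC' hdisj hA huA (by tauto) hu' hv'
  · exact hC.exists_superset_of_separates hw hC' hdisj hA (by tauto) huA hv' hu'

end CutComponents

/-- Let `N` be a family of cuts of a finite set `V` none of which contains `u₀` or `v₀`.
Then for any `u, v ∈ V` there is at most one connected component `C` of `N` in which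
`u` and `v` lie in two distinct atoms, neither of which is the root atom (the atom
containing `u₀` and `v₀`). -/
theorem stmt_11 {V : Type*} [Fintype V] [DecidableEq V]
    (u₀ v₀ : V) (huv : u₀ ≠ v₀)
    (N : Set (Finset V)) (hN : ∀ S ∈ N, S.Nonempty ∧ S ≠ Finset.univ)
    (hroot : ∀ S ∈ N, u₀ ∉ S ∧ v₀ ∉ S)
    (u v : V) (C C' : Set (Finset V))
    (hC : IsCutComponent N C) (hC' : IsCutComponent N C')
    (hCdist : atomOf C u ≠ atomOf C v)
    (hCu : atomOf C u ≠ atomOf C u₀) (hCv : atomOf C v ≠ atomOf C u₀)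
    (hC'dist : atomOf C' u ≠ atomOf C' v)
    (hC'u : atomOf C' u ≠ atomOf C' u₀) (hC'v : atomOf C' v ≠ atomOf C' u₀) :
    C = C' := by
  have hw : ∀ S ∈ N, u₀ ∉ S := fun S hS => (hroot S hS).1
  by_contra hne
  have hdisj : Disjoint C C' :=
    Set.disjoint_left.2 fun _ hA hA' => hne (hC.eq_of_mem hC' hA hA')
  obtain ⟨B, hB, hCB⟩ := hC.exists_superset hw hC' hdisj hCdist hC'u hC'v
  obtain ⟨A, hA, hC'A⟩ := hC'.exists_superset hw hC hdisj.symm hC'dist hCu hCv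
  have hAB : A = B := (hCB A hA).antisymm (hC'A B hB)
  exact Set.disjoint_left.1 hdisj hA (hAB ▸ hB)
end
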